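/- (Estimate 2, left extreme subdomain.) Let ε ∈ C^∞(cl(Ω_1 × (0,T))) satisfy: 𝒫_p ε = 0 in Ω_1 × (0,T); ε = 0 on (∂D × [a_1,b_1]) × [0,T]; ε(·,·,0) = 0 on Ω_1; and ε(·,a_1,·) = 0 on D × (0,T). Set ν = ∂_{x_n}ε. Let φ be a strictly positive C^2 function with φ'/φ and φ''/φ bounded such that 4p + 2 b_n(t)/a_{n,n}(t) + φ'(a_1)/φ(a_1) > 0 for all t ∈ [0,T], and let ϕ be a strictly positive C^1 function on [0,T] with ϕ'(t)/ϕ(t) ≤ −Γ for all t, where Γ = sup_t|a_{n,n}| · sup|φ''/φ| + 2 sup_t|a_{n,n}| · (sup|φ'/φ|)² + 2 sup_t|c − p b_n − p² a_{n,n}| + sup_t|2p a_{n,n}+b_n| · sup|φ'/φ|. Then for every (X, x_n, t) ∈ cl(D) × [a_1,b_1] × [0,T]: ν(X,x_n,t)² φ(x_n) ϕ(t) ≤ sup_{cl(D)×[0,T]} ν(·,b_1,·)² φ(b_1) ϕ(·). -/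

import Mathlib

open Set Filter

/-- Spatial partial derivative `∂u/∂xᵢ` of a function `u : ℝⁿ → ℝ`. -/
noncomputable def pd1 {m : ℕ} (i : Fin m) (u : (Fin m → ℝ) → ℝ) (x : Fin m → ℝ) : ℝ :=
  fderiv ℝ u x (Pi.single i 1)

/-- Second spatial partial derivative `∂²u/∂xᵢ∂xⱼ`. -/
noncomputable def pd2 {m : ℕ} (i j : Fin m) (u : (Fin m → ℝ) → ℝ) (x : Fin m → ℝ) : ℝ :=
  pd1 i (fun y => pd1 j u y) x

/-- The parabolic operator
`𝒫u = ∂ₜu − Σᵢⱼ aᵢⱼ(t) ∂ᵢ∂ⱼu + Σᵢ bᵢ(t) ∂ᵢu + c(t) u`. -/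
noncomputable def parabolicOp {m : ℕ} (a : Fin m → Fin m → ℝ → ℝ) (b : Fin m → ℝ → ℝ)
    (c : ℝ → ℝ) (u : (Fin m → ℝ) → ℝ → ℝ) (x : Fin m → ℝ) (t : ℝ) : ℝ :=
  deriv (fun s => u x s) t
    - ∑ i, ∑ j, a i j t * pd2 i j (fun y => u y t) x
    + ∑ i, b i t * pd1 i (fun y => u y t) x
    + c t * u x t

/-- The transformed operator `𝒫ₚε = ∂ₜε − Σᵢⱼ aᵢⱼ ∂ᵢ∂ⱼε
+ Σ_{i<n} (2p aᵢₙ + bᵢ) ∂ᵢε + (2p aₙₙ + bₙ) ∂ₙε + (c − p bₙ − p² aₙₙ) ε`,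
in dimension `n+1`, the last coordinate playing the role of `xₙ`. -/
noncomputable def transOp {n : ℕ} (p : ℝ) (a : Fin (n+1) → Fin (n+1) → ℝ → ℝ)
    (b : Fin (n+1) → ℝ → ℝ) (c : ℝ → ℝ)
    (ε : (Fin (n+1) → ℝ) → ℝ → ℝ) (x : Fin (n+1) → ℝ) (t : ℝ) : ℝ :=
  deriv (fun s => ε x s) t
    - ∑ i, ∑ j, a i j t * pd2 i j (fun y => ε y t) x
    + ∑ i ∈ Finset.univ.erase (Fin.last n),
        (2 * p * a i (Fin.last n) t + b i t) * pd1 i (fun y => ε y t) x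
    + (2 * p * a (Fin.last n) (Fin.last n) t + b (Fin.last n) t) *
        pd1 (Fin.last n) (fun y => ε y t) x
    + (c t - p * b (Fin.last n) t - p ^ 2 * a (Fin.last n) (Fin.last n) t) * ε x t

open Topology

/-- Necessary second-order condition at a local maximum of a function of one variable. -/
theorem second_deriv_nonpos_of_isLocalMax {g g' : ℝ → ℝ} {g'' x₀ : ℝ}
    (hg : ∀ᶠ s in 𝓝 x₀, HasDerivAt g (g' s) s) (hg' : HasDerivAt g' g'' x₀)
    (hmax : IsLocalMax g x₀) : g'' ≤ 0 := by
  by_contra! hpos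
  have hd : deriv g =ᶠ[𝓝 x₀] g' := hg.mono fun s hs => hs.deriv
  have hdd : deriv (deriv g) x₀ = g'' := by rw [hd.deriv_eq, hg'.deriv]
  have hmin : IsLocalMin g x₀ := isLocalMin_of_deriv_deriv_pos (by rw [hdd]; exact hpos)
    hmax.deriv_eq_zero hg.self_of_nhds.continuousAt
  have hconst : g =ᶠ[𝓝 x₀] fun _ => g x₀ := by
    filter_upwards [hmax, hmin] with s h1 h2 using le_antisymm h1 h2
  have h0 : deriv g =ᶠ[𝓝 x₀] fun _ => 0 := by
    filter_upwards [hconst.deriv] with s hs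
    simpa using hs
  have : deriv (deriv g) x₀ = 0 := by simpa using h0.deriv_eq
  linarith

/-- A positive semidefinite real matrix is a Gram matrix. -/
theorem exists_gram_decomposition {m : ℕ} (A : Fin m → Fin m → ℝ)
    (hsymm : ∀ i j, A i j = A j i)
    (hpos : ∀ ξ : Fin m → ℝ, 0 ≤ ∑ i, ∑ j, A i j * ξ i * ξ j) :
    ∃ B : Fin m → Fin m → ℝ, ∀ i j, A i j = ∑ k, B k i * B k j := by
  have hA : (Matrix.of A).PosSemidef := by
    refine .of_dotProduct_mulVec_nonneg ?_ fun x => ?_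
    · ext i j
      exact hsymm j i
    · refine (hpos x).trans_eq ?_
      simp only [dotProduct, Matrix.mulVec, Finset.mul_sum, Matrix.of_apply, star_trivial]
      refine Finset.sum_congr rfl fun i _ => Finset.sum_congr rfl fun j _ => ?_
      ring
  open scoped MatrixOrder in
  obtain ⟨B, hB⟩ : ∃ B : Matrix (Fin m) (Fin m) ℝ, Matrix.of A = star B * B :=
    CStarAlgebra.nonneg_iff_eq_star_mul_self.mp hA.nonneg
  refine ⟨B, fun i j => ?_⟩
  have := congrFun (congrFun hB i) j
  simpa [Matrix.mul_apply] using this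

/-- The `i`-th spatial coordinate vector of space-time. -/
noncomputable def spaceDir {m : ℕ} (i : Fin m) : (Fin m → ℝ) × ℝ := (Pi.single i 1, 0)

/-- The time direction of space-time. -/
def timeDir {m : ℕ} : (Fin m → ℝ) × ℝ := (0, 1)

/-- A line of space-time. -/
theorem hasDerivAt_line {E : Type*} [NormedAddCommGroup E] [NormedSpace ℝ E] (q v : E) (s : ℝ) :
    HasDerivAt (fun s : ℝ => q + s • v) v s := by
  simpa using ((hasDerivAt_id s).smul_const v).const_add q

/-- Derivative along a line. -/
theorem HasFDerivAt.hasDerivAt_line {E F : Type*} [NormedAddCommGroup E] [NormedSpace ℝ E]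
    [NormedAddCommGroup F] [NormedSpace ℝ F] {f : E → F} {f' : E →L[ℝ] F} {q v : E} {s : ℝ}
    (h : HasFDerivAt f f' (q + s • v)) : HasDerivAt (fun s : ℝ => f (q + s • v)) (f' v) s :=
  HasFDerivAt.comp_hasDerivAt s h (_root_.hasDerivAt_line q v s)

theorem HasFDerivAt.hasDerivAt_line_zero {E F : Type*} [NormedAddCommGroup E] [NormedSpace ℝ E]
    [NormedAddCommGroup F] [NormedSpace ℝ F] {f : E → F} {f' : E →L[ℝ] F} {q : E} (v : E)
    (h : HasFDerivAt f f' q) : HasDerivAt (fun s : ℝ => f (q + s • v)) (f' v) 0 :=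
  HasFDerivAt.hasDerivAt_line (by simpa using h)

/-- The parabolic operator written with space-time Fréchet derivatives. -/
noncomputable def spacetimeOp {m : ℕ} (a : Fin m → Fin m → ℝ → ℝ) (β : Fin m → ℝ → ℝ)
    (C : ℝ → ℝ) (u : (Fin m → ℝ) × ℝ → ℝ) (q : (Fin m → ℝ) × ℝ) : ℝ :=
  fderiv ℝ u q timeDir
    - ∑ i, ∑ j, a i j q.2 * fderiv ℝ (fderiv ℝ u) q (spaceDir i) (spaceDir j)
    + ∑ i, β i q.2 * fderiv ℝ u q (spaceDir i)
    + C q.2 * u q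

theorem fderiv_slice_apply_single {m : ℕ} {u : (Fin m → ℝ) × ℝ → ℝ} {x : Fin m → ℝ} {t : ℝ}
    (h : DifferentiableAt ℝ u (x, t)) (i : Fin m) :
    pd1 i (fun y => u (y, t)) x = fderiv ℝ u (x, t) (spaceDir i) := by
  have h1 : HasFDerivAt (fun y : Fin m → ℝ => (y, t))
      (ContinuousLinearMap.inl ℝ (Fin m → ℝ) ℝ) x := hasFDerivAt_prodMk_left x t
  have h2 := HasFDerivAt.comp x h.hasFDerivAt h1
  have h3 : fderiv ℝ (fun y => u (y, t)) x = _ := h2.fderiv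
  simp [pd1, h3, spaceDir]

theorem transOp_eq_spacetimeOp {n : ℕ} (p : ℝ) (a : Fin (n+1) → Fin (n+1) → ℝ → ℝ)
    (b : Fin (n+1) → ℝ → ℝ) (c : ℝ → ℝ) (ε : (Fin (n+1) → ℝ) → ℝ → ℝ)
    {O : Set ((Fin (n+1) → ℝ) × ℝ)} (hO : IsOpen O)
    (hε : ContDiffOn ℝ 2 (fun q : (Fin (n+1) → ℝ) × ℝ => ε q.1 q.2) O)
    {x : Fin (n+1) → ℝ} {t : ℝ} (hx : (x, t) ∈ O) :
    transOp p a b c ε x t =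
      spacetimeOp a (fun i t => 2 * p * a i (Fin.last n) t + b i t)
        (fun t => c t - p * b (Fin.last n) t - p ^ 2 * a (Fin.last n) (Fin.last n) t)
        (fun q => ε q.1 q.2) (x, t) := by
  set u : (Fin (n+1) → ℝ) × ℝ → ℝ := fun q => ε q.1 q.2 with hu
  have hdiff : ∀ q ∈ O, DifferentiableAt ℝ u q := fun q hq =>
    (hε.differentiableOn (by norm_num)).differentiableAt (hO.mem_nhds hq)
  have hdiff' : DifferentiableAt ℝ (fderiv ℝ u) (x, t) :=
    ((hε.fderiv_of_isOpen hO (m := 1) (by norm_num)).differentiableOn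
      (by norm_num)).differentiableAt (hO.mem_nhds hx)
  have h1 : ∀ i, pd1 i (fun y => ε y t) x = fderiv ℝ u (x, t) (spaceDir i) := fun i =>
    fderiv_slice_apply_single (hdiff _ hx) i
  have h2 : ∀ i j, pd2 i j (fun y => ε y t) x =
      fderiv ℝ (fderiv ℝ u) (x, t) (spaceDir i) (spaceDir j) := by
    intro i j
    have hev : (fun y => pd1 j (fun y => ε y t) y) =ᶠ[𝓝 x]
        fun y => fderiv ℝ u (y, t) (spaceDir j) := by
      have : ∀ᶠ y in 𝓝 x, (y, t) ∈ O :=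
        (Continuous.prodMk_left t).continuousAt.eventually (hO.mem_nhds hx)
      filter_upwards [this] with y hy using fderiv_slice_apply_single (hdiff _ hy) j
    have h3 : pd2 i j (fun y => ε y t) x
        = pd1 i (fun y => fderiv ℝ u (y, t) (spaceDir j)) x := by
      simp only [pd2]
      simp only [pd1] at hev ⊢
      rw [hev.fderiv_eq]
    have h4 : HasFDerivAt (fun q => fderiv ℝ u q (spaceDir j))
        ((fderiv ℝ (fderiv ℝ u) (x, t)).flip (spaceDir j)) (x, t) := by
      simpa using hdiff'.hasFDerivAt.clm_apply (hasFDerivAt_const (spaceDir j) (x, t))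
    rw [h3, fderiv_slice_apply_single (u := fun q => fderiv ℝ u q (spaceDir j))
      h4.differentiableAt i, h4.fderiv]
    rfl
  have h3 : deriv (fun s => ε x s) t = fderiv ℝ u (x, t) timeDir := by
    have h5 := HasFDerivAt.comp_hasDerivAt t (hdiff _ hx).hasFDerivAt
      ((hasDerivAt_const t x).prodMk (hasDerivAt_id t))
    exact h5.deriv
  simp only [transOp, spacetimeOp, h1, h2, h3]
  rw [← Finset.sum_erase_add Finset.univ
    (fun i => (2 * p * a i (Fin.last n) t + b i t) * fderiv ℝ u (x, t) (spaceDir i))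
    (Finset.mem_univ (Fin.last n))]
  simp only [hu]
  ring

/-- The normal derivative of a solution is again a solution. -/
theorem spacetimeOp_fderiv_apply {m : ℕ} (a : Fin m → Fin m → ℝ → ℝ) (β : Fin m → ℝ → ℝ)
    (C : ℝ → ℝ) {u : (Fin m → ℝ) × ℝ → ℝ} {O : Set ((Fin m → ℝ) × ℝ)} (hO : IsOpen O)
    (hu : ContDiffOn ℝ 4 u O) (hpde : ∀ q ∈ O, spacetimeOp a β C u q = 0) (k : Fin m)
    {q : (Fin m → ℝ) × ℝ} (hq : q ∈ O) :
    spacetimeOp a β C (fun q => fderiv ℝ u q (spaceDir k)) q = 0 := by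
  have hu1 : ContDiffOn ℝ 3 (fderiv ℝ u) O := hu.fderiv_of_isOpen hO (by norm_num)
  have hu2 : ContDiffOn ℝ 2 (fderiv ℝ (fderiv ℝ u)) O := hu1.fderiv_of_isOpen hO (by norm_num)
  have hd0 : ∀ q ∈ O, HasFDerivAt u (fderiv ℝ u q) q := fun q hq =>
    ((hu.differentiableOn (by norm_num)).differentiableAt (hO.mem_nhds hq)).hasFDerivAt
  have hd1 : ∀ q ∈ O, HasFDerivAt (fderiv ℝ u) (fderiv ℝ (fderiv ℝ u) q) q := fun q hq =>
    ((hu1.differentiableOn (by norm_num)).differentiableAt (hO.mem_nhds hq)).hasFDerivAt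
  have hd2 : ∀ q ∈ O, HasFDerivAt (fderiv ℝ (fderiv ℝ u))
      (fderiv ℝ (fderiv ℝ (fderiv ℝ u)) q) q := fun q hq =>
    ((hu2.differentiableOn (by norm_num)).differentiableAt (hO.mem_nhds hq)).hasFDerivAt
  have hs1 : ∀ q ∈ O, ∀ v w, fderiv ℝ (fderiv ℝ u) q v w = fderiv ℝ (fderiv ℝ u) q w v :=
    fun q hq v w => ((hu.contDiffAt (hO.mem_nhds hq)).isSymmSndFDerivAt
      (by rw [minSmoothness_of_isRCLikeNormedField]; norm_num)).eq v w
  have hs2 : ∀ v w, fderiv ℝ (fderiv ℝ (fderiv ℝ u)) q v w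
      = fderiv ℝ (fderiv ℝ (fderiv ℝ u)) q w v :=
    fun v w => ((hu1.contDiffAt (hO.mem_nhds hq)).isSymmSndFDerivAt
      (by rw [minSmoothness_of_isRCLikeNormedField]; norm_num)).eq v w
  -- the derivative of `∂ᵤ∂ᵥ u` along `w`
  have hline2 : ∀ v w z, HasDerivAt (fun s : ℝ => fderiv ℝ (fderiv ℝ u) (q + s • z) v w)
      (fderiv ℝ (fderiv ℝ (fderiv ℝ u)) q z v w) 0 := by
    intro v w z
    have h := HasFDerivAt.hasDerivAt_line_zero
      (F := (Fin m → ℝ) × ℝ →L[ℝ] (Fin m → ℝ) × ℝ →L[ℝ] ℝ) z (hd2 q hq)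
    simpa using (h.clm_apply (hasDerivAt_const 0 v)).clm_apply (hasDerivAt_const 0 w)
  have hline1 : ∀ v z, HasDerivAt (fun s : ℝ => fderiv ℝ u (q + s • z) v)
      (fderiv ℝ (fderiv ℝ u) q z v) 0 := by
    intro v z
    have h := (hd1 q hq).hasDerivAt_line_zero z
    simpa using h.clm_apply (hasDerivAt_const 0 v)
  have hnear : ∀ z : (Fin m → ℝ) × ℝ, ∀ᶠ s : ℝ in 𝓝 0, q + s • z ∈ O := by
    intro z
    have hc : ContinuousAt (fun s : ℝ => q + s • z) 0 := (hasDerivAt_line q z 0).continuousAt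
    exact hc.eventually (by simpa using hO.mem_nhds hq)
  have hs3 : ∀ z v w, fderiv ℝ (fderiv ℝ (fderiv ℝ u)) q z v w
      = fderiv ℝ (fderiv ℝ (fderiv ℝ u)) q z w v := by
    intro z v w
    refine (hline2 v w z).unique ((hline2 w v z).congr_of_eventuallyEq ?_)
    filter_upwards [hnear z] with s hs using hs1 _ hs v w
  have hN1 : ∀ q ∈ O, fderiv ℝ (fun q => fderiv ℝ u q (spaceDir k)) q
      = (fderiv ℝ (fderiv ℝ u) q).flip (spaceDir k) := by
    intro q hq
    have h4 : HasFDerivAt (fun q => fderiv ℝ u q (spaceDir k))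
        ((fderiv ℝ (fderiv ℝ u) q).flip (spaceDir k)) q := by
      simpa using (hd1 q hq).clm_apply (hasFDerivAt_const (spaceDir k) q)
    exact h4.fderiv
  have hN2 : ∀ v w, fderiv ℝ (fderiv ℝ (fun q => fderiv ℝ u q (spaceDir k))) q v w
      = fderiv ℝ (fderiv ℝ (fderiv ℝ u)) q v w (spaceDir k) := by
    intro v w
    have hu3 : ContDiffOn ℝ 2 (fderiv ℝ (fun q => fderiv ℝ u q (spaceDir k))) O :=
      ContDiffOn.fderiv_of_isOpen (hu1.clm_apply contDiffOn_const) hO (by norm_num)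
    have hd3 := ((hu3.differentiableOn (by norm_num)).differentiableAt
      (hO.mem_nhds hq)).hasFDerivAt.hasDerivAt_line_zero v
    have hd4 := hd3.clm_apply (hasDerivAt_const 0 w)
    refine HasDerivAt.unique (by simpa using hd4) ((hline2 w (spaceDir k) v).congr_of_eventuallyEq ?_)
    filter_upwards [hnear v] with s hs
    rw [hN1 _ hs]
    rfl
  have hpl : HasDerivAt (fun s : ℝ => spacetimeOp a β C u (q + s • spaceDir k)) 0 0 := by
    refine (hasDerivAt_const (0:ℝ) (0:ℝ)).congr_of_eventuallyEq ?_
    filter_upwards [hnear (spaceDir k)] with s hs using hpde _ hs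
  have hpl' : HasDerivAt (fun s : ℝ => spacetimeOp a β C u (q + s • spaceDir k))
      (fderiv ℝ (fderiv ℝ u) q (spaceDir k) timeDir
        - ∑ i, ∑ j, a i j q.2 *
            fderiv ℝ (fderiv ℝ (fderiv ℝ u)) q (spaceDir k) (spaceDir i) (spaceDir j)
        + ∑ i, β i q.2 * fderiv ℝ (fderiv ℝ u) q (spaceDir k) (spaceDir i)
        + C q.2 * fderiv ℝ u q (spaceDir k)) 0 := by
    have ht : ∀ s : ℝ, (q + s • spaceDir k).2 = q.2 := fun s => by simp [spaceDir]
    simp only [spacetimeOp, ht]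
    refine HasDerivAt.add (HasDerivAt.add (HasDerivAt.sub (hline1 _ _) ?_) ?_) ?_
    · exact HasDerivAt.fun_sum fun i _ => HasDerivAt.fun_sum fun j _ =>
        (hline2 _ _ _).const_mul _
    · exact HasDerivAt.fun_sum fun i _ => (hline1 _ _).const_mul _
    · exact ((hd0 q hq).hasDerivAt_line_zero _).const_mul _
  rw [hpl.unique hpl']
  simp only [spacetimeOp, hN2, hN1 q hq, ContinuousLinearMap.flip_apply]
  rw [hs1 q hq timeDir]
  congr 3
  · refine Finset.sum_congr rfl fun i _ => Finset.sum_congr rfl fun j _ => ?_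
    rw [hs3 (spaceDir i), hs2 (spaceDir i)]
  · exact funext fun i => by rw [hs1 q hq (spaceDir i)]

/-- First-order condition at a right-sided local maximum. -/
theorem deriv_nonpos_of_max_right {g : ℝ → ℝ} {g' : ℝ} (hg : HasDerivWithinAt g g' (Ici 0) 0)
    (hmax : ∀ᶠ s in 𝓝[≥] (0:ℝ), g s ≤ g 0) : g' ≤ 0 := by
  have hmem : (1:ℝ) ∈ posTangentConeAt (Ici (0:ℝ)) 0 := by
    refine mem_posTangentConeAt_of_segment_subset ?_
    intro y hy
    rw [zero_add, segment_eq_Icc zero_le_one] at hy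
    exact hy.1
  simpa using IsLocalMaxOn.hasFDerivWithinAt_nonpos hmax hg.hasFDerivWithinAt hmem

/-- First-order condition at a left-sided local maximum. -/
theorem deriv_nonneg_of_max_left {g : ℝ → ℝ} {g' : ℝ} (hg : HasDerivAt g g' 0)
    (hmax : ∀ᶠ s in 𝓝 (0:ℝ), s ≤ 0 → g s ≤ g 0) : 0 ≤ g' := by
  have h1 : HasDerivAt (fun s => g (-s)) (-g') 0 := by
    have := HasDerivAt.scomp (0:ℝ) (by simpa using hg) (hasDerivAt_neg (0:ℝ))
    simpa [Function.comp_def] using this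
  have h2 : ∀ᶠ s in 𝓝 (0:ℝ), -s ≤ 0 → g (-s) ≤ g 0 := by
    have : Tendsto (fun s : ℝ => -s) (𝓝 0) (𝓝 0) := by
      simpa using (continuous_neg (G := ℝ)).tendsto 0
    exact this.eventually hmax
  have h3 := deriv_nonpos_of_max_right (h1.hasDerivWithinAt (s := Ici 0)) (by
    filter_upwards [nhdsWithin_le_nhds h2, self_mem_nhdsWithin] with s hs hs'
    simpa using hs (by simpa using hs'))
  linarith

/-- First- and second-order conditions along a line at a maximum of `N² φ(xₖ)`. -/
theorem weighted_sq_max_along_line {m : ℕ} {N : (Fin m → ℝ) × ℝ → ℝ}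
    {O : Set ((Fin m → ℝ) × ℝ)} (hO : IsOpen O) (hN : ContDiffOn ℝ 2 N O)
    {q : (Fin m → ℝ) × ℝ} (hq : q ∈ O) (k : Fin m) {φ : ℝ → ℝ} (hφ : ContDiff ℝ 2 φ)
    (v : (Fin m → ℝ) × ℝ)
    (hmax : ∀ᶠ s in 𝓝 (0:ℝ), N (q + s • v) ^ 2 * φ (q.1 k + s * v.1 k) ≤ N q ^ 2 * φ (q.1 k)) :
    2 * N q * fderiv ℝ N q v * φ (q.1 k) + N q ^ 2 * (deriv φ (q.1 k) * v.1 k) = 0 ∧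
    2 * (fderiv ℝ N q v ^ 2 + N q * fderiv ℝ (fderiv ℝ N) q v v) * φ (q.1 k)
      + 4 * N q * fderiv ℝ N q v * (deriv φ (q.1 k) * v.1 k)
      + N q ^ 2 * (deriv (deriv φ) (q.1 k) * v.1 k ^ 2) ≤ 0 := by
  have hnear : ∀ᶠ s : ℝ in 𝓝 0, q + s • v ∈ O := by
    have hc : ContinuousAt (fun s : ℝ => q + s • v) 0 := (hasDerivAt_line q v 0).continuousAt
    exact hc.eventually (by simpa using hO.mem_nhds hq)
  have hd0 : ∀ s : ℝ, q + s • v ∈ O →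
      HasDerivAt (fun s : ℝ => N (q + s • v)) (fderiv ℝ N (q + s • v) v) s := fun s hs =>
    ((hN.differentiableOn (by norm_num)).differentiableAt
      (hO.mem_nhds hs)).hasFDerivAt.hasDerivAt_line
  have hd1 : HasDerivAt (fun s : ℝ => fderiv ℝ N (q + s • v) v)
      (fderiv ℝ (fderiv ℝ N) q v v) 0 := by
    have h := (((hN.fderiv_of_isOpen hO (m := 1) (by norm_num)).differentiableOn
      (by norm_num)).differentiableAt (hO.mem_nhds hq)).hasFDerivAt.hasDerivAt_line_zero v
    simpa using h.clm_apply (hasDerivAt_const 0 v)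
  have hl : ∀ s : ℝ, HasDerivAt (fun s : ℝ => q.1 k + s * v.1 k) (v.1 k) s := fun s => by
    simpa using ((hasDerivAt_id s).mul_const (v.1 k)).const_add (q.1 k)
  have hφ0 : ∀ s : ℝ, HasDerivAt (fun s : ℝ => φ (q.1 k + s * v.1 k))
      (deriv φ (q.1 k + s * v.1 k) * v.1 k) s := fun s =>
    ((hφ.differentiable (by norm_num)) _).hasDerivAt.comp s (hl s)
  have hφ1 : HasDerivAt (fun s : ℝ => deriv φ (q.1 k + s * v.1 k))
      (deriv (deriv φ) (q.1 k) * v.1 k) 0 := by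
    have hφ' : ContDiff ℝ 1 (deriv φ) := ((contDiff_succ_iff_deriv (n := 1)).1
      (by simpa [one_add_one_eq_two] using hφ)).2.2
    have := ((hφ'.differentiable (by norm_num)) (q.1 k + 0 * v.1 k)).hasDerivAt.comp 0 (hl 0)
    simpa [Function.comp_def] using this
  have hN0 := hd0 0 (by simpa using hq)
  have hg : ∀ᶠ s in 𝓝 (0:ℝ), HasDerivAt (fun s => N (q + s • v) ^ 2 * φ (q.1 k + s * v.1 k))
      (2 * N (q + s • v) * fderiv ℝ N (q + s • v) v * φ (q.1 k + s * v.1 k)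
        + N (q + s • v) ^ 2 * (deriv φ (q.1 k + s * v.1 k) * v.1 k)) s := by
    filter_upwards [hnear] with s hs
    refine (((hd0 s hs).pow 2).mul (hφ0 s)).congr_deriv ?_
    simp
  have hg1 : HasDerivAt (fun s => 2 * N (q + s • v) * fderiv ℝ N (q + s • v) v *
        φ (q.1 k + s * v.1 k) + N (q + s • v) ^ 2 * (deriv φ (q.1 k + s * v.1 k) * v.1 k))
      (2 * (fderiv ℝ N q v ^ 2 + N q * fderiv ℝ (fderiv ℝ N) q v v) * φ (q.1 k)
      + 4 * N q * fderiv ℝ N q v * (deriv φ (q.1 k) * v.1 k)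
      + N q ^ 2 * (deriv (deriv φ) (q.1 k) * v.1 k ^ 2)) 0 := by
    refine ((((hN0.const_mul 2).mul hd1).mul (hφ0 0)).add
      ((hN0.pow 2).mul (hφ1.mul_const (v.1 k)))).congr_deriv ?_
    simp
    ring
  have hmax' : IsLocalMax (fun s => N (q + s • v) ^ 2 * φ (q.1 k + s * v.1 k)) (0:ℝ) := by
    filter_upwards [hmax] with s hs
    simpa using hs
  refine ⟨?_, second_deriv_nonpos_of_isLocalMax hg hg1 hmax'⟩
  simpa using hmax'.hasDerivAt_eq_zero hg.self_of_nhds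

/-- The weighted square of a solution of the parabolic equation has no interior maximum where
the time weight decays fast enough. -/
theorem no_interior_max {m : ℕ} {a : Fin m → Fin m → ℝ → ℝ} {β : Fin m → ℝ → ℝ} {C : ℝ → ℝ}
    {N : (Fin m → ℝ) × ℝ → ℝ} {O : Set ((Fin m → ℝ) × ℝ)} (hO : IsOpen O)
    (hN : ContDiffOn ℝ 2 N O) {q : (Fin m → ℝ) × ℝ} (hq : q ∈ O)
    (hpde : spacetimeOp a β C N q = 0) (k : Fin m)
    (hsymm : ∀ i j, a i j q.2 = a j i q.2)
    (hpsd : ∀ ξ : Fin m → ℝ, 0 ≤ ∑ i, ∑ j, a i j q.2 * ξ i * ξ j)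
    {φ : ℝ → ℝ} (hφ : ContDiff ℝ 2 φ) (hφ_pos : ∀ x, 0 < φ x)
    {ψ : ℝ → ℝ} {ψ' : ℝ} (hψ : HasDerivAt ψ ψ' q.2) (hψ_pos : 0 < ψ q.2)
    (hdecay : ψ' / ψ q.2 < a k k q.2 * (deriv (deriv φ) (q.1 k) / φ (q.1 k))
      - 3 / 2 * a k k q.2 * (deriv φ (q.1 k) / φ (q.1 k)) ^ 2 + 2 * C q.2
      - β k q.2 * (deriv φ (q.1 k) / φ (q.1 k)))
    (hmax : ∀ᶠ q' in 𝓝 q, q'.2 ≤ q.2 →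
      N q' ^ 2 * φ (q'.1 k) * ψ q'.2 ≤ N q ^ 2 * φ (q.1 k) * ψ q.2)
    (hne : N q ≠ 0) : False := by
  have hline : ∀ v : (Fin m → ℝ) × ℝ, ∀ᶠ s in 𝓝 (0:ℝ), (q + s • v).2 ≤ q.2 →
      N (q + s • v) ^ 2 * φ ((q + s • v).1 k) * ψ (q + s • v).2
        ≤ N q ^ 2 * φ (q.1 k) * ψ q.2 := by
    intro v
    have hc : ContinuousAt (fun s : ℝ => q + s • v) 0 := (hasDerivAt_line q v 0).continuousAt
    exact hc.eventually (by simpa using hmax)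
  have hspace : ∀ v : (Fin m → ℝ) × ℝ, v.2 = 0 → _ := fun v hv =>
    weighted_sq_max_along_line hO hN hq k hφ v (by
      filter_upwards [hline v] with s hs
      simp only [Prod.snd_add, Prod.smul_snd, hv, smul_eq_mul, mul_zero, add_zero, le_refl,
        Prod.fst_add, Prod.smul_fst, Pi.add_apply, Pi.smul_apply, forall_const] at hs
      exact le_of_mul_le_mul_right hs hψ_pos)
  set r := deriv φ (q.1 k) / φ (q.1 k) with hr
  set r2 := deriv (deriv φ) (q.1 k) / φ (q.1 k) with hr2
  have hφ0 := hφ_pos (q.1 k)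
  have hr' : deriv φ (q.1 k) = r * φ (q.1 k) := by rw [hr]; field_simp
  have hr2' : deriv (deriv φ) (q.1 k) = r2 * φ (q.1 k) := by rw [hr2]; field_simp
  have hfirst : ∀ v : (Fin m → ℝ) × ℝ, v.2 = 0 → fderiv ℝ N q v = -(N q * r * v.1 k) / 2 := by
    intro v hv
    have h := (hspace v hv).1
    rw [hr'] at h
    have h' : (N q * φ (q.1 k)) * (2 * fderiv ℝ N q v + N q * r * v.1 k) = 0 := by
      linear_combination h
    have := (mul_eq_zero.1 h').resolve_left (mul_ne_zero hne hφ0.ne')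
    linarith
  have hsecond : ∀ v : (Fin m → ℝ) × ℝ, v.2 = 0 →
      2 * N q * fderiv ℝ (fderiv ℝ N) q v v ≤ N q ^ 2 * v.1 k ^ 2 * (3 / 2 * r ^ 2 - r2) := by
    intro v hv
    have h := (hspace v hv).2
    rw [hr', hr2', hfirst v hv] at h
    refine le_of_mul_le_mul_right ?_ hφ0
    linarith
  obtain ⟨B, hB⟩ := exists_gram_decomposition (fun i j => a i j q.2) hsymm hpsd
  have hvec : ∀ l, (∑ i, B l i • (spaceDir i : (Fin m → ℝ) × ℝ)) = (B l, 0) := by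
    intro l
    have : (fun i => B l i • (spaceDir i : (Fin m → ℝ) × ℝ))
        = fun i => ContinuousLinearMap.inl ℝ (Fin m → ℝ) ℝ (Pi.single i (B l i)) := by
      funext i
      simp only [spaceDir, ContinuousLinearMap.inl_apply, Prod.smul_mk,
        ← Pi.single_smul, smul_eq_mul, mul_one, mul_zero]
    rw [this, ← map_sum, Finset.univ_sum_single]
    rfl
  have hquad : ∑ i, ∑ j, a i j q.2 * fderiv ℝ (fderiv ℝ N) q (spaceDir i) (spaceDir j)
      = ∑ l, fderiv ℝ (fderiv ℝ N) q (B l, 0) (B l, 0) := by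
    have h : ∀ l, fderiv ℝ (fderiv ℝ N) q (B l, 0) (B l, 0) = ∑ i, ∑ j,
        B l i * B l j * fderiv ℝ (fderiv ℝ N) q (spaceDir i) (spaceDir j) := by
      intro l
      rw [← hvec]
      simp only [map_sum, map_smul, sum_apply,
        smul_apply, smul_eq_mul, Finset.mul_sum]
      rw [Finset.sum_comm]
      refine Finset.sum_congr rfl fun i _ => Finset.sum_congr rfl fun j _ => ?_
      ring
    simp_rw [h, hB, Finset.sum_mul]
    exact (Finset.sum_congr rfl fun i _ => Finset.sum_comm).trans Finset.sum_comm
  have htrace : 2 * N q * ∑ i, ∑ j, a i j q.2 *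
      fderiv ℝ (fderiv ℝ N) q (spaceDir i) (spaceDir j)
      ≤ N q ^ 2 * a k k q.2 * (3 / 2 * r ^ 2 - r2) := by
    rw [hquad, hB k k, Finset.mul_sum, Finset.mul_sum, Finset.sum_mul]
    refine Finset.sum_le_sum fun l _ => ?_
    have := hsecond (B l, 0) rfl
    simp only at this
    linarith
  have hdrift : ∑ i, β i q.2 * fderiv ℝ N q (spaceDir i) = -(β k q.2 * (N q * r)) / 2 := by
    rw [Finset.sum_eq_single k]
    · rw [hfirst _ rfl]
      simp [spaceDir]
      ring
    · intro i _ hik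
      rw [hfirst _ rfl]
      simp [spaceDir, hik.symm]
    · simp
  have htime : 0 ≤ 2 * N q * fderiv ℝ N q timeDir + N q ^ 2 * (ψ' / ψ q.2) := by
    have h1 := ((hN.differentiableOn (by norm_num)).differentiableAt
      (hO.mem_nhds hq)).hasFDerivAt.hasDerivAt_line_zero timeDir
    have h2 : HasDerivAt (fun s => ψ (q.2 + s)) ψ' 0 :=
      HasDerivAt.comp_const_add q.2 0 (by simpa using hψ)
    have h3 := ((h1.pow 2).mul_const (φ (q.1 k))).mul h2
    have h4 := deriv_nonneg_of_max_left h3 (by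
      filter_upwards [hline timeDir] with s hs hs'
      have := hs (by simpa [timeDir] using hs')
      simpa [timeDir, Prod.mk_zero_zero] using this)
    simp only [zero_smul, add_zero, Pi.pow_apply] at h4
    have h5 : ψ' = (ψ' / ψ q.2) * ψ q.2 := by field_simp
    rw [h5] at h4
    have h6 : 0 < φ (q.1 k) * ψ q.2 := mul_pos hφ0 hψ_pos
    refine nonneg_of_mul_nonneg_left (b := φ (q.1 k) * ψ q.2) ?_ h6
    simp at h4
    linarith
  have hN2 : 0 < N q ^ 2 := by positivity
  rw [spacetimeOp, hdrift] at hpde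
  have := mul_lt_mul_of_pos_left hdecay hN2
  have h7 : 2 * N q * (fderiv ℝ N q timeDir
    - ∑ i, ∑ j, a i j q.2 * fderiv ℝ (fderiv ℝ N) q (spaceDir i) (spaceDir j)
    + -(β k q.2 * (N q * r)) / 2 + C q.2 * N q) = 0 := by rw [hpde, mul_zero]
  nlinarith

/-- Derivative along a line that stays in the set near its base point. -/
theorem HasFDerivWithinAt.hasDerivAt_line_of_eventually {E F : Type*} [NormedAddCommGroup E]
    [NormedSpace ℝ E] [NormedAddCommGroup F] [NormedSpace ℝ F] {f : E → F} {f' : E →L[ℝ] F}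
    {S : Set E} {q : E} (v : E) (h : HasFDerivWithinAt f f' S q)
    (hv : ∀ᶠ s : ℝ in 𝓝 0, q + s • v ∈ S) :
    HasDerivAt (fun s : ℝ => f (q + s • v)) (f' v) 0 := by
  have h1 : HasDerivWithinAt (fun s : ℝ => f (q + s • v)) (f' v) {s : ℝ | q + s • v ∈ S} 0 :=
    HasFDerivWithinAt.comp_hasDerivWithinAt (0:ℝ) (t := S) (by simpa using h)
      (hasDerivAt_line q v 0).hasDerivWithinAt (fun s hs => hs)
  exact h1.hasDerivAt hv

/-- The part of the open set `U` lying in the closed half-space `c ≤ xₖ`. -/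
def halfSpacePart {m : ℕ} (k : Fin m) (c : ℝ) (U : Set ((Fin m → ℝ) × ℝ)) :
    Set ((Fin m → ℝ) × ℝ) := {q | c ≤ q.1 k} ∩ U

theorem uniqueDiffOn_halfSpacePart {m : ℕ} (k : Fin m) (c : ℝ) {U : Set ((Fin m → ℝ) × ℝ)}
    (hU : IsOpen U) : UniqueDiffOn ℝ (halfSpacePart k c U) := by
  refine UniqueDiffOn.inter (uniqueDiffOn_convex ?_ ?_) hU
  · intro x hx y hy s t hs ht hst
    simp only [mem_ofPred_eq, Prod.fst_add, Prod.smul_fst, Pi.add_apply, Pi.smul_apply,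
      smul_eq_mul] at hx hy ⊢
    calc c = s * c + t * c := by rw [← add_mul, hst, one_mul]
      _ ≤ _ := by gcongr
  · have ho : IsOpen {q : (Fin m → ℝ) × ℝ | c < q.1 k} :=
      isOpen_lt continuous_const (by fun_prop)
    have hsub : {q : (Fin m → ℝ) × ℝ | c < q.1 k} ⊆ {q | c ≤ q.1 k} := fun q hq => by
      simp only [mem_ofPred_eq] at hq ⊢
      exact hq.le
    exact ⟨(fun _ => c + 1, 0), interior_maximal hsub ho (by simp)⟩

theorem halfSpacePart_subset_closure {m : ℕ} (k : Fin m) (c : ℝ) {U : Set ((Fin m → ℝ) × ℝ)}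
    (hU : IsOpen U) : halfSpacePart k c U ⊆ closure ({q | c < q.1 k} ∩ U) := by
  rintro q ⟨hq, hqU⟩
  have hc : ContinuousAt (fun s : ℝ => q + s • (spaceDir k : (Fin m → ℝ) × ℝ)) 0 :=
    (hasDerivAt_line q _ 0).continuousAt
  have hlim : Tendsto (fun s : ℝ => q + s • (spaceDir k : (Fin m → ℝ) × ℝ)) (𝓝[>] 0) (𝓝 q) := by
    have := hc.tendsto.mono_left (nhdsWithin_le_nhds (s := Ioi 0))
    simpa using this
  refine mem_closure_of_tendsto hlim ?_
  filter_upwards [hlim.eventually (hU.mem_nhds hqU), self_mem_nhdsWithin] with s hs hs'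
  refine ⟨?_, hs⟩
  simp only [mem_ofPred_eq, mem_Ioi] at hq hs' ⊢
  simp [spaceDir]
  linarith

/-- The weighted square of the normal derivative of a solution vanishing on the face `xₖ = c`
has no positive maximum on that face. -/
theorem no_face_max {m : ℕ} {a : Fin m → Fin m → ℝ → ℝ} {β : Fin m → ℝ → ℝ} {C : ℝ → ℝ}
    (ha : ∀ i j, Continuous (a i j)) (hβ : ∀ i, Continuous (β i)) (hC : Continuous C)
    {u : (Fin m → ℝ) × ℝ → ℝ} {U : Set ((Fin m → ℝ) × ℝ)} (hU : IsOpen U) (k : Fin m) (c : ℝ)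
    (hu : ContDiffOn ℝ 3 u (halfSpacePart k c U))
    (hpde : ∀ q ∈ {q : (Fin m → ℝ) × ℝ | c < q.1 k} ∩ U, spacetimeOp a β C u q = 0)
    (hzero : ∀ q ∈ U, q.1 k = c → u q = 0)
    {q : (Fin m → ℝ) × ℝ} (hqU : q ∈ U) (hqc : q.1 k = c) (hakk : 0 < a k k q.2)
    {φ : ℝ → ℝ} (hφ : Differentiable ℝ φ) (hφ_pos : ∀ x, 0 < φ x)
    (hsign : 0 < 2 * β k q.2 / a k k q.2 + deriv φ c / φ c)
    {N : (Fin m → ℝ) × ℝ → ℝ}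
    (hN : ∀ q ∈ halfSpacePart k c U, N q = fderivWithin ℝ u (halfSpacePart k c U) q (spaceDir k))
    (hmax : ∀ᶠ q' in 𝓝 q, q' ∈ halfSpacePart k c U → q'.2 = q.2 →
      N q' ^ 2 * φ (q'.1 k) ≤ N q ^ 2 * φ (q.1 k))
    (hne : N q ≠ 0) : False := by
  set S := halfSpacePart k c U with hS
  set O : Set ((Fin m → ℝ) × ℝ) := {q | c < q.1 k} ∩ U with hO_def
  have hO : IsOpen O := (isOpen_lt continuous_const (by fun_prop)).inter hU
  have hOS : O ⊆ S := inter_subset_inter_left U fun q hq => by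
    simp only [mem_ofPred_eq] at hq ⊢
    exact hq.le
  have hSU : UniqueDiffOn ℝ S := uniqueDiffOn_halfSpacePart k c hU
  have hSO : S ⊆ closure O := halfSpacePart_subset_closure k c hU
  have hqS : q ∈ S := ⟨hqc.ge, hqU⟩
  set G := fderivWithin ℝ u S with hG
  set G2 := fderivWithin ℝ G S with hG2
  have hGc : ContDiffOn ℝ 2 G S := hu.fderivWithin hSU (by norm_num)
  have hG2c : ContDiffOn ℝ 1 G2 S := hGc.fderivWithin hSU (by norm_num)
  have hud : ∀ q ∈ S, HasFDerivWithinAt u (G q) S q := fun q hq =>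
    (hu.differentiableOn (by norm_num) q hq).hasFDerivWithinAt
  have hGd : ∀ q ∈ S, HasFDerivWithinAt G (G2 q) S q := fun q hq =>
    (hGc.differentiableOn (by norm_num) q hq).hasFDerivWithinAt
  have hGO : ∀ q ∈ O, G q = fderiv ℝ u q := fun q hq =>
    fderivWithin_of_mem_nhds (mem_of_superset (hO.mem_nhds hq) hOS)
  have hG2O : ∀ q ∈ O, G2 q = fderiv ℝ (fderiv ℝ u) q := fun q hq => by
    rw [hG2, fderivWithin_of_mem_nhds (mem_of_superset (hO.mem_nhds hq) hOS)]
    refine Filter.EventuallyEq.fderiv_eq ?_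
    filter_upwards [hO.mem_nhds hq] with q' hq' using hGO q' hq'
  have hpdeS : EqOn (fun q => G q timeDir
      - ∑ i, ∑ j, a i j q.2 * G2 q (spaceDir i) (spaceDir j)
      + ∑ i, β i q.2 * G q (spaceDir i) + C q.2 * u q) (fun _ => 0) S := by
    refine EqOn.of_subset_closure (s := O) ?_ ?_ continuousOn_const hOS hSO
    · intro q hq
      simp only [hGO q hq, hG2O q hq]
      exact hpde q hq
    · have h1 := hGc.continuousOn
      have h2 := hG2c.continuousOn
      have h3 := hu.continuousOn
      fun_prop
  -- lines in the face
  have hstay : ∀ q ∈ U, ∀ v : (Fin m → ℝ) × ℝ, ∀ᶠ s : ℝ in 𝓝 0, q + s • v ∈ U := by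
    intro q hq v
    have hc : ContinuousAt (fun s : ℝ => q + s • v) 0 := (hasDerivAt_line q v 0).continuousAt
    exact hc.eventually (by simpa using hU.mem_nhds hq)
  have hface : ∀ q v : (Fin m → ℝ) × ℝ, q.1 k = c → v.1 k = 0 → ∀ s : ℝ,
      (q + s • v).1 k = c := by
    intro q v hq hv s
    simp [hq, hv]
  have hstayS : ∀ q ∈ U, q.1 k = c → ∀ v : (Fin m → ℝ) × ℝ, v.1 k = 0 →
      ∀ᶠ s : ℝ in 𝓝 0, q + s • v ∈ S := by
    intro q hq hqc v hv
    filter_upwards [hstay q hq v] with s hs using ⟨(hface q v hqc hv s).ge, hs⟩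
  have hGtan : ∀ q ∈ U, q.1 k = c → ∀ v : (Fin m → ℝ) × ℝ, v.1 k = 0 → G q v = 0 := by
    intro q hq hqc v hv
    have h1 := (hud q ⟨hqc.ge, hq⟩).hasDerivAt_line_of_eventually v (hstayS q hq hqc v hv)
    refine h1.unique ((hasDerivAt_const (0:ℝ) (0:ℝ)).congr_of_eventuallyEq ?_)
    filter_upwards [hstay q hq v] with s hs using hzero _ hs (hface q v hqc hv s)
  have hG2line : ∀ v w : (Fin m → ℝ) × ℝ, v.1 k = 0 →
      HasDerivAt (fun s : ℝ => G (q + s • v) w) (G2 q v w) 0 := by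
    intro v w hv
    have h1 := (hGd q hqS).hasDerivAt_line_of_eventually v (hstayS q hqU hqc v hv)
    simpa using h1.clm_apply (hasDerivAt_const 0 w)
  have hG2tan : ∀ v w : (Fin m → ℝ) × ℝ, v.1 k = 0 → w.1 k = 0 → G2 q v w = 0 := by
    intro v w hv hw
    refine (hG2line v w hv).unique ((hasDerivAt_const (0:ℝ) (0:ℝ)).congr_of_eventuallyEq ?_)
    filter_upwards [hstay q hqU v] with s hs using hGtan _ hs (hface q v hqc hv s) w hw
  have hsymm : ∀ v w, G2 q v w = G2 q w v := fun v w =>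
    ((hu q hqS).isSymmSndFDerivWithinAt
      (by rw [minSmoothness_of_isRCLikeNormedField]; norm_num) hSU
      (closure_mono (interior_maximal hOS hO) (hSO hqS)) hqS).eq v w
  have hφ0 := hφ_pos c
  have hdir : ∀ i, i ≠ k → (spaceDir i : (Fin m → ℝ) × ℝ).1 k = 0 := fun i hi => by
    simp [spaceDir, hi.symm]
  have hmaxline : ∀ v : (Fin m → ℝ) × ℝ, ∀ᶠ s in 𝓝 (0:ℝ), q + s • v ∈ S → (q + s • v).2 = q.2 →
      N (q + s • v) ^ 2 * φ ((q + s • v).1 k) ≤ N q ^ 2 * φ (q.1 k) := by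
    intro v
    have hc : ContinuousAt (fun s : ℝ => q + s • v) 0 := (hasDerivAt_line q v 0).continuousAt
    exact hc.eventually (by simpa using hmax)
  have hNtan : ∀ i, i ≠ k → G2 q (spaceDir i) (spaceDir k) = 0 := by
    intro i hi
    have h1 := (hG2line (spaceDir i) (spaceDir k) (hdir i hi)).pow 2
    have h2 : IsLocalMax (fun s : ℝ => G (q + s • spaceDir i) (spaceDir k) ^ 2) 0 := by
      filter_upwards [hmaxline (spaceDir i), hstayS q hqU hqc _ (hdir i hi)] with s hs hs'
      have h3 := hs hs' (by simp [spaceDir])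
      rw [hN _ hs', hN q hqS, hface q _ hqc (hdir i hi), hqc] at h3
      simpa using le_of_mul_le_mul_right h3 hφ0
    have h3 := h2.hasDerivAt_eq_zero h1
    rw [hN q hqS] at hne
    simpa [hne] using h3
  have hnormal : a k k q.2 * G2 q (spaceDir k) (spaceDir k) = β k q.2 * N q := by
    have h := hpdeS hqS
    simp only at h
    rw [hGtan q hqU hqc timeDir (by simp [timeDir]), hzero q hqU hqc,
      Finset.sum_eq_single k, Finset.sum_eq_single k, Finset.sum_eq_single k, ← hN q hqS] at h
    · linarith
    · intro i _ hi
      rw [hGtan q hqU hqc _ (hdir i hi), mul_zero]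
    · simp
    · intro i _ hi
      rw [hsymm, hNtan i hi, mul_zero]
    · simp
    · intro i _ hi
      refine Finset.sum_eq_zero fun j _ => ?_
      by_cases hj : j = k
      · rw [hj, hNtan i hi, mul_zero]
      · rw [hG2tan _ _ (hdir i hi) (hdir j hj), mul_zero]
    · simp
  have hright : 2 * N q * G2 q (spaceDir k) (spaceDir k) * φ c + N q ^ 2 * deriv φ c ≤ 0 := by
    have hstayR : ∀ᶠ s : ℝ in 𝓝[≥] 0, q + s • (spaceDir k : (Fin m → ℝ) × ℝ) ∈ S := by
      filter_upwards [nhdsWithin_le_nhds (hstay q hqU (spaceDir k)), self_mem_nhdsWithin]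
        with s hs hs'
      refine ⟨?_, hs⟩
      simpa [spaceDir, hqc] using hs'
    have h1 : HasDerivWithinAt (fun s : ℝ => G (q + s • spaceDir k))
        (G2 q (spaceDir k)) (Ici 0) 0 := by
      have h2 : HasDerivWithinAt (fun s : ℝ => G (q + s • spaceDir k)) (G2 q (spaceDir k))
          {s : ℝ | q + s • (spaceDir k : (Fin m → ℝ) × ℝ) ∈ S} 0 :=
        HasFDerivWithinAt.comp_hasDerivWithinAt (0:ℝ) (t := S) (by simpa using hGd q hqS)
          (hasDerivAt_line q _ 0).hasDerivWithinAt (fun s hs => hs)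
      exact h2.mono_of_mem_nhdsWithin hstayR
    have h2 : HasDerivWithinAt (fun s : ℝ => G (q + s • spaceDir k) (spaceDir k))
        (G2 q (spaceDir k) (spaceDir k)) (Ici 0) 0 := by
      simpa using h1.clm_apply (hasDerivWithinAt_const 0 (Ici 0) (spaceDir k))
    have h3 : HasDerivWithinAt (fun s : ℝ => φ (c + s)) (deriv φ c) (Ici 0) 0 :=
      (HasDerivAt.comp_const_add c 0 (by simpa using (hφ c).hasDerivAt)).hasDerivWithinAt
    have h4 := deriv_nonpos_of_max_right ((h2.pow 2).mul h3) (by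
      filter_upwards [nhdsWithin_le_nhds (hmaxline (spaceDir k)), hstayR] with s hs hs'
      have h5 := hs hs' (by simp [spaceDir])
      rw [hN _ hs', hN q hqS] at h5
      simpa [spaceDir, hqc, Prod.mk_zero_zero] using h5)
    simp only [zero_smul, add_zero, Pi.pow_apply, ← hN q hqS] at h4
    simp at h4
    linarith
  have hN2 : 0 < N q ^ 2 := by positivity
  have h1 : G2 q (spaceDir k) (spaceDir k) = β k q.2 / a k k q.2 * N q := by
    field_simp
    linarith
  have h2 : deriv φ c = deriv φ c / φ c * φ c := by field_simp
  rw [h1, h2] at hright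
  have h3 : 0 < (N q ^ 2 * φ c) * (2 * β k q.2 / a k k q.2 + deriv φ c / φ c) := by positivity
  have h4 : (N q ^ 2 * φ c) * (2 * β k q.2 / a k k q.2 + deriv φ c / φ c)
      = 2 * N q * (β k q.2 / a k k q.2 * N q) * φ c + N q ^ 2 * (deriv φ c / φ c * φ c) := by
    ring
  linarith

/-- The open cylinder `D × (a₁, b₁)`. -/
def cylinder {n : ℕ} (D : Set (Fin n → ℝ)) (a1 b1 : ℝ) : Set (Fin (n+1) → ℝ) :=
  {x | Fin.init x ∈ D ∧ x (Fin.last n) ∈ Ioo a1 b1}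

theorem continuous_init {n : ℕ} : Continuous (fun x : Fin (n+1) → ℝ => (Fin.init x : Fin n → ℝ)) :=
  continuous_pi fun i => continuous_apply i.castSucc

theorem closure_cylinder {n : ℕ} (D : Set (Fin n → ℝ)) {a1 b1 : ℝ} (hab : a1 < b1) :
    closure (cylinder D a1 b1) =
      {x : Fin (n+1) → ℝ | Fin.init x ∈ closure D ∧ x (Fin.last n) ∈ Icc a1 b1} := by
  apply subset_antisymm
  · refine closure_minimal (fun x hx => ⟨subset_closure hx.1, Ioo_subset_Icc_self hx.2⟩) ?_
    exact (isClosed_closure.preimage continuous_init).inter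
      (isClosed_Icc.preimage (continuous_apply (Fin.last n)))
  · rintro x ⟨hx1, hx2⟩
    rw [← closure_Ioo hab.ne] at hx2
    have hc : Continuous fun z : (Fin n → ℝ) × ℝ => (Fin.snoc z.1 z.2 : Fin (n+1) → ℝ) :=
      Continuous.finSnoc continuous_fst continuous_snd
    have h := map_mem_closure₂ (f := fun (X : Fin n → ℝ) (s : ℝ) =>
      (Fin.snoc X s : Fin (n+1) → ℝ)) (u := cylinder D a1 b1) hc hx1 hx2
      (fun X hX s hs => ⟨by simpa using hX, by simpa using hs⟩)
    simpa using h

theorem hasDerivAt_snoc {n : ℕ} (X : Fin n → ℝ) (s : ℝ) :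
    HasDerivAt (fun s : ℝ => (Fin.snoc X s : Fin (n+1) → ℝ)) (Pi.single (Fin.last n) 1) s := by
  rw [hasDerivAt_pi]
  intro i
  refine Fin.lastCases ?_ (fun j => ?_) i
  · simpa using hasDerivAt_id' s
  · simpa [Fin.castSucc_ne_last] using hasDerivAt_const s (X j)

/-- A Fréchet derivative within the closed cylinder determines the normal derivative. -/
theorem HasFDerivWithinAt.hasDerivWithinAt_snoc {n : ℕ} {D : Set (Fin n → ℝ)} {a1 b1 : ℝ}
    (hab : a1 < b1) {f : (Fin (n+1) → ℝ) → ℝ} {L : (Fin (n+1) → ℝ) →L[ℝ] ℝ}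
    {x : Fin (n+1) → ℝ} (hx : x ∈ closure (cylinder D a1 b1))
    (h : HasFDerivWithinAt f L (closure (cylinder D a1 b1)) x) :
    HasDerivWithinAt (fun s : ℝ => f (Fin.snoc (Fin.init x) s)) (L (Pi.single (Fin.last n) 1))
      (Icc a1 b1) (x (Fin.last n)) := by
  rw [closure_cylinder D hab] at hx h
  have hmaps : MapsTo (fun s : ℝ => (Fin.snoc (Fin.init x) s : Fin (n+1) → ℝ)) (Icc a1 b1)
      {x : Fin (n+1) → ℝ | Fin.init x ∈ closure D ∧ x (Fin.last n) ∈ Icc a1 b1} :=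
    fun s hs => ⟨by simpa using hx.1, by simpa using hs⟩
  exact HasFDerivWithinAt.comp_hasDerivWithinAt (x (Fin.last n)) (by simpa using h)
    (hasDerivAt_snoc (Fin.init x) _).hasDerivWithinAt hmaps

/-- The normal derivative of a function of space-time, within the closed cylinder. -/
noncomputable def normalDeriv {n : ℕ} (D : Set (Fin n → ℝ)) (a1 b1 : ℝ)
    (u : (Fin (n+1) → ℝ) × ℝ → ℝ) (q : (Fin (n+1) → ℝ) × ℝ) : ℝ :=
  fderivWithin ℝ (fun y => u (y, q.2)) (closure (cylinder D a1 b1)) q.1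
    (Pi.single (Fin.last n) 1)

theorem HasFDerivWithinAt.slice {n : ℕ} {Ω : Set (Fin (n+1) → ℝ)} {I : Set ℝ}
    {u : (Fin (n+1) → ℝ) × ℝ → ℝ} {L : (Fin (n+1) → ℝ) × ℝ →L[ℝ] ℝ}
    {q : (Fin (n+1) → ℝ) × ℝ} (hq : q ∈ Ω ×ˢ I) (h : HasFDerivWithinAt u L (Ω ×ˢ I) q) :
    HasFDerivWithinAt (fun y => u (y, q.2)) (L.comp (ContinuousLinearMap.inl ℝ _ ℝ)) Ω q.1 :=
  HasFDerivWithinAt.comp q.1 (t := Ω ×ˢ I) (g := u) h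
    (hasFDerivAt_prodMk_left q.1 q.2).hasFDerivWithinAt (fun _ hy => ⟨hy, hq.2⟩)

theorem normalDeriv_eq {n : ℕ} {D : Set (Fin n → ℝ)} {a1 b1 : ℝ} (hab : a1 < b1) {I : Set ℝ}
    {u : (Fin (n+1) → ℝ) × ℝ → ℝ} {L : (Fin (n+1) → ℝ) × ℝ →L[ℝ] ℝ}
    {q : (Fin (n+1) → ℝ) × ℝ} (hq : q ∈ closure (cylinder D a1 b1) ×ˢ I)
    (h : HasFDerivWithinAt u L (closure (cylinder D a1 b1) ×ˢ I) q) :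
    normalDeriv D a1 b1 u q = L (spaceDir (Fin.last n)) := by
  have h1 := h.slice hq
  have h2 := h1.differentiableWithinAt.hasFDerivWithinAt.hasDerivWithinAt_snoc hab hq.1
  have h3 := h1.hasDerivWithinAt_snoc hab hq.1
  have hmem := hq.1
  rw [closure_cylinder D hab] at hmem
  exact UniqueDiffWithinAt.eq_deriv _ (uniqueDiffOn_Icc hab _ hmem.2) h2 h3

theorem continuousOn_normalDeriv {n : ℕ} {D : Set (Fin n → ℝ)} {a1 b1 : ℝ} (hab : a1 < b1)
    {I : Set ℝ} {u : (Fin (n+1) → ℝ) × ℝ → ℝ}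
    (hu : ContDiffOn ℝ 1 u (closure (cylinder D a1 b1) ×ˢ I)) :
    ContinuousOn (normalDeriv D a1 b1 u) (closure (cylinder D a1 b1) ×ˢ I) := by
  intro q hq
  obtain ⟨w, hw, hwK, -, f', hf', hf'c⟩ :=
    (contDiffWithinAt_succ_iff_hasFDerivWithinAt' (n := 0) (by simp)).1
      (by simpa using hu q hq)
  rw [insert_eq_of_mem hq] at hw hwK
  have hc : ContinuousWithinAt (fun q => f' q (spaceDir (Fin.last n)))
      (closure (cylinder D a1 b1) ×ˢ I) q :=
    hf'c.continuousWithinAt.clm_apply continuousWithinAt_const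
  have heq : ∀ q' ∈ w, normalDeriv D a1 b1 u q' = f' q' (spaceDir (Fin.last n)) :=
    fun q' hq' => normalDeriv_eq hab (hwK hq') (hf' q' hq')
  refine hc.congr_of_eventuallyEq ?_ (heq q (mem_of_mem_nhdsWithin hq hw))
  exact eventually_of_mem hw heq

/-- The normal derivative vanishes where the function vanishes along the normal segment. -/
theorem normalDeriv_eq_zero {n : ℕ} {D : Set (Fin n → ℝ)} {a1 b1 : ℝ} (hab : a1 < b1)
    {I : Set ℝ} {u : (Fin (n+1) → ℝ) × ℝ → ℝ}
    {q : (Fin (n+1) → ℝ) × ℝ} (hq : q ∈ closure (cylinder D a1 b1) ×ˢ I)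
    (hu : DifferentiableWithinAt ℝ u (closure (cylinder D a1 b1) ×ˢ I) q)
    (hzero : ∀ s ∈ Icc a1 b1, u (Fin.snoc (Fin.init q.1) s, q.2) = 0) :
    normalDeriv D a1 b1 u q = 0 := by
  have h1 := (hu.hasFDerivWithinAt.slice hq).differentiableWithinAt.hasFDerivWithinAt
  have h2 := h1.hasDerivWithinAt_snoc hab hq.1
  have hmem := hq.1
  rw [closure_cylinder D hab] at hmem
  refine UniqueDiffWithinAt.eq_deriv _ (uniqueDiffOn_Icc hab _ hmem.2) h2 ?_
  exact (hasDerivWithinAt_const _ _ (0:ℝ)).congr hzero (hzero _ hmem.2)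

theorem isOpen_cylinder {n : ℕ} {D : Set (Fin n → ℝ)} (hD : IsOpen D) (a1 b1 : ℝ) :
    IsOpen (cylinder D a1 b1) :=
  (hD.preimage continuous_init).inter (isOpen_Ioo.preimage (continuous_apply (Fin.last n)))

theorem isCompact_closure_cylinder {n : ℕ} {D : Set (Fin n → ℝ)} (hD : Bornology.IsBounded D)
    {a1 b1 : ℝ} (hab : a1 < b1) : IsCompact (closure (cylinder D a1 b1)) := by
  have h : closure (cylinder D a1 b1) = (fun z : (Fin n → ℝ) × ℝ =>
      (Fin.snoc z.1 z.2 : Fin (n+1) → ℝ)) '' (closure D ×ˢ Icc a1 b1) := by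
    rw [closure_cylinder D hab]
    ext x
    constructor
    · rintro ⟨h1, h2⟩
      exact ⟨(Fin.init x, x (Fin.last n)), ⟨h1, h2⟩, by simp⟩
    · rintro ⟨z, ⟨h1, h2⟩, rfl⟩
      exact ⟨by simpa using h1, by simpa using h2⟩
  rw [h]
  exact (hD.isCompact_closure.prod isCompact_Icc).image
    (Continuous.finSnoc continuous_fst continuous_snd)

/-- Maximum principle for the weighted square of the normal derivative, under a strict decay
condition on the time weight. -/
theorem weighted_sq_normalDeriv_le {n : ℕ} {T T' : ℝ} (hT' : T' < T)
    {a : Fin (n+1) → Fin (n+1) → ℝ → ℝ} {β : Fin (n+1) → ℝ → ℝ} {C : ℝ → ℝ}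
    (ha : ∀ i j, Continuous (a i j)) (hβ : ∀ i, Continuous (β i)) (hC : Continuous C)
    (hsymm : ∀ i j t, a i j t = a j i t)
    (hpsd : ∀ t ∈ Ioo 0 T, ∀ ξ : Fin (n+1) → ℝ, 0 ≤ ∑ i, ∑ j, a i j t * ξ i * ξ j)
    (hann : ∀ t ∈ Ioo 0 T, 0 < a (Fin.last n) (Fin.last n) t)
    {D : Set (Fin n → ℝ)} (hD : IsOpen D) (hDb : Bornology.IsBounded D)
    {a1 b1 : ℝ} (hab : a1 < b1) {u : (Fin (n+1) → ℝ) × ℝ → ℝ}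
    (hu : ContDiffOn ℝ 4 u (closure (cylinder D a1 b1) ×ˢ Icc 0 T))
    (hpde : ∀ q ∈ cylinder D a1 b1 ×ˢ Ioo 0 T, spacetimeOp a β C u q = 0)
    (hleft : ∀ q : (Fin (n+1) → ℝ) × ℝ, Fin.init q.1 ∈ D → q.1 (Fin.last n) = a1 →
      q.2 ∈ Ioo 0 T → u q = 0)
    (hlat : ∀ q ∈ closure (cylinder D a1 b1) ×ˢ Icc 0 T, Fin.init q.1 ∈ frontier D →
      normalDeriv D a1 b1 u q = 0)
    (hinit : ∀ q ∈ closure (cylinder D a1 b1) ×ˢ Icc 0 T, q.2 = 0 →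
      normalDeriv D a1 b1 u q = 0)
    {φ : ℝ → ℝ} (hφ : ContDiff ℝ 2 φ) (hφ_pos : ∀ x, 0 < φ x)
    (hsign : ∀ t ∈ Ioo 0 T, 0 < 2 * β (Fin.last n) t / a (Fin.last n) (Fin.last n) t
      + deriv φ a1 / φ a1)
    {ψ : ℝ → ℝ} (hψ : Differentiable ℝ ψ) (hψ_pos : ∀ t ∈ Icc 0 T, 0 < ψ t)
    (hdecay : ∀ t ∈ Ioo 0 T, ∀ x, deriv ψ t / ψ t <
      a (Fin.last n) (Fin.last n) t * (deriv (deriv φ) x / φ x)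
      - 3 / 2 * a (Fin.last n) (Fin.last n) t * (deriv φ x / φ x) ^ 2 + 2 * C t
      - β (Fin.last n) t * (deriv φ x / φ x))
    {M : ℝ} (hM : 0 ≤ M)
    (hright : ∀ q ∈ closure (cylinder D a1 b1) ×ˢ Icc 0 T, q.1 (Fin.last n) = b1 →
      normalDeriv D a1 b1 u q ^ 2 * φ b1 * ψ q.2 ≤ M) :
    ∀ q ∈ closure (cylinder D a1 b1) ×ˢ Icc 0 T',
      normalDeriv D a1 b1 u q ^ 2 * φ (q.1 (Fin.last n)) * ψ q.2 ≤ M := by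
  intro q hq
  set N := normalDeriv D a1 b1 u with hNdef
  set K : Set ((Fin (n+1) → ℝ) × ℝ) := closure (cylinder D a1 b1) ×ˢ Icc 0 T with hK
  set K' : Set ((Fin (n+1) → ℝ) × ℝ) := closure (cylinder D a1 b1) ×ˢ Icc 0 T' with hK'
  have hKK : K' ⊆ K := prod_mono_right (Icc_subset_Icc_right hT'.le)
  have hNc : ContinuousOn N K := continuousOn_normalDeriv hab (hu.of_le (by norm_num))
  have hφc := hφ.continuous
  have hψc := hψ.continuous
  obtain ⟨q₀, hq₀, hmax⟩ := ((isCompact_closure_cylinder hDb hab).prod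
    (isCompact_Icc (a := (0:ℝ)) (b := T'))).exists_isMaxOn ⟨q, hq⟩
    (f := fun q => N q ^ 2 * φ (q.1 (Fin.last n)) * ψ q.2)
    (by have := hNc.mono hKK; fun_prop)
  refine (hmax hq).trans ?_
  by_contra! hlt
  have hq₀K := hKK hq₀
  have hne : N q₀ ≠ 0 := by
    intro h0
    simp only [h0] at hlt
    norm_num at hlt
    linarith
  have hmem := hq₀.1
  rw [closure_cylinder D hab] at hmem
  obtain ⟨hcl, hlast⟩ := hmem
  have hinD : Fin.init q₀.1 ∈ D := by
    by_contra hnot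
    refine hne (hlat q₀ hq₀K ?_)
    rw [hD.frontier_eq]
    exact ⟨hcl, hnot⟩
  have htime : q₀.2 ∈ Ioo 0 T :=
    ⟨lt_of_le_of_ne hq₀.2.1 fun h => hne (hinit q₀ hq₀K h.symm), hq₀.2.2.trans_lt hT'⟩
  have hlast_lt : q₀.1 (Fin.last n) < b1 := by
    refine lt_of_le_of_ne hlast.2 fun h => ?_
    have := hright q₀ hq₀K h
    simp only [h] at hlt
    linarith
  have hKd : ∀ q ∈ K, HasFDerivWithinAt u (fderivWithin ℝ u K q) K q := fun q hq =>
    (hu.differentiableOn (by norm_num) q hq).hasFDerivWithinAt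
  rcases hlast.1.eq_or_lt with hface | hgt
  · set U : Set ((Fin (n+1) → ℝ) × ℝ) :=
      {q | Fin.init q.1 ∈ D} ∩ ({q | q.1 (Fin.last n) < b1} ∩ {q | q.2 ∈ Ioo 0 T}) with hU
    have hUo : IsOpen U := (hD.preimage (continuous_init.comp continuous_fst)).inter
      ((isOpen_lt (by fun_prop) continuous_const).inter (isOpen_Ioo.preimage continuous_snd))
    have hSK : halfSpacePart (Fin.last n) a1 U ⊆ K := by
      rintro q ⟨h1, h2, h3, h4⟩
      simp only [mem_ofPred_eq] at h1 h2 h3 h4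
      refine ⟨?_, Ioo_subset_Icc_self h4⟩
      rw [closure_cylinder D hab]
      exact ⟨subset_closure h2, h1, h3.le⟩
    refine no_face_max ha hβ hC hUo (Fin.last n) a1 ((hu.mono hSK).of_le (by norm_num))
      ?_ ?_ (q := q₀) ⟨hinD, hlast_lt, htime⟩ hface.symm (hann _ htime)
      (hφ.differentiable (by norm_num)) hφ_pos (hsign _ htime) (N := N) ?_ ?_ hne
    · rintro q ⟨h1, h2, h3, h4⟩
      exact hpde q ⟨⟨h2, h1, h3⟩, h4⟩
    · rintro q ⟨h2, h3, h4⟩ h1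
      exact hleft q h2 h1 h4
    · intro q hqS
      rw [hNdef, normalDeriv_eq hab (hSK hqS) (hKd q (hSK hqS)),
        ((hKd q (hSK hqS)).mono hSK).fderivWithin (uniqueDiffOn_halfSpacePart _ _ hUo q hqS)]
    · refine Eventually.of_forall fun q hqS hqt => ?_
      have h1 : q ∈ K' := ⟨(hSK hqS).1, by rw [hqt]; exact hq₀.2⟩
      have h2 : N q ^ 2 * φ (q.1 (Fin.last n)) * ψ q.2
        ≤ N q₀ ^ 2 * φ (q₀.1 (Fin.last n)) * ψ q₀.2 := hmax h1
      rw [hqt] at h2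
      exact le_of_mul_le_mul_right h2 (hψ_pos _ hq₀K.2)
  · set O : Set ((Fin (n+1) → ℝ) × ℝ) := cylinder D a1 b1 ×ˢ Ioo 0 T with hO_def
    have hO : IsOpen O := (isOpen_cylinder hD a1 b1).prod isOpen_Ioo
    have hOK : O ⊆ K := prod_mono subset_closure Ioo_subset_Icc_self
    have huO : ContDiffOn ℝ 4 u O := hu.mono hOK
    have hq₀O : q₀ ∈ O := ⟨⟨hinD, hgt, hlast_lt⟩, htime⟩
    have hNO : ∀ q ∈ O, N q = fderiv ℝ u q (spaceDir (Fin.last n)) := by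
      intro q hqO
      rw [hNdef, normalDeriv_eq hab (hOK hqO) (hKd q (hOK hqO)),
        fderivWithin_of_mem_nhds (mem_of_superset (hO.mem_nhds hqO) hOK)]
    refine no_interior_max hO
      (((huO.fderiv_of_isOpen hO (m := 3) (by norm_num)).clm_apply contDiffOn_const).of_le
        (by norm_num)) hq₀O
      (spacetimeOp_fderiv_apply a β C hO huO hpde (Fin.last n) hq₀O) (Fin.last n)
      (fun i j => hsymm i j _) (hpsd _ htime) hφ hφ_pos (hψ q₀.2).hasDerivAt
      (hψ_pos _ hq₀K.2) (hdecay _ htime _) ?_ (by rwa [← hNO _ hq₀O])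
    filter_upwards [hO.mem_nhds hq₀O] with q hqO hqt
    rw [← hNO _ hq₀O, ← hNO _ hqO]
    exact hmax (show q ∈ K' from ⟨(hOK hqO).1, (hOK hqO).2.1, hqt.trans hq₀.2.2⟩)

/-- The lower bound behind the decay rate of the time weight. -/
theorem neg_decayRate_le {A r r2 C B As R1 R2 Cs Bs : ℝ} (hA : |A| ≤ As) (hr : |r| ≤ R1)
    (hr2 : |r2| ≤ R2) (hC : |C| ≤ Cs) (hB : |B| ≤ Bs) :
    -(As * R2 + 2 * As * R1 ^ 2 + 2 * Cs + Bs * R1) ≤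
      A * r2 - 3 / 2 * A * r ^ 2 + 2 * C - B * r := by
  have hAs := (abs_nonneg A).trans hA
  have hBs := (abs_nonneg B).trans hB
  have h1 : |A * r2| ≤ As * R2 := by
    rw [abs_mul]; exact mul_le_mul hA hr2 (abs_nonneg _) hAs
  have h2 : |B * r| ≤ Bs * R1 := by
    rw [abs_mul]; exact mul_le_mul hB hr (abs_nonneg _) hBs
  have h3 : |A * r ^ 2| ≤ As * R1 ^ 2 := by
    rw [abs_mul, abs_pow]
    exact mul_le_mul hA (pow_le_pow_left₀ (abs_nonneg _) hr 2) (by positivity) hAs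
  have h4 : 0 ≤ As * R1 ^ 2 := by positivity
  linarith [(abs_le.1 h1).1, (abs_le.1 h2).2, (abs_le.1 h3).2, (abs_le.1 hC).1]

theorem abs_le_ciSup_of_bounded {f : ℝ → ℝ} (h : ∃ C, ∀ t, |f t| ≤ C) (t : ℝ) :
    |f t| ≤ ⨆ s, |f s| :=
  le_ciSup (f := fun s => |f s|) (h.imp fun _ hC => by rintro _ ⟨s, rfl⟩; exact hC s) t

/-- Estimate 2, left extreme subdomain: with the additional Dirichlet
condition `ε(·,a₁,·) = 0` and the sign condition
`4p + 2bₙ/aₙₙ + φ'(a₁)/φ(a₁) > 0`, the weighted squared normal derivative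
`ν² φ(xₙ) ϕ(t)`, `ν = ∂ₙε`, attains its maximum on the face `xₙ = b₁` only. -/
theorem estimate_2_left_extreme_subdomain
    {n : ℕ} (T p ν₀ : ℝ) (hT : 0 < T) (hν₀ : 0 < ν₀)
    (a : Fin (n+1) → Fin (n+1) → ℝ → ℝ) (b : Fin (n+1) → ℝ → ℝ) (c : ℝ → ℝ)
    (ha_symm : ∀ i j t, a i j t = a j i t)
    (ha_smooth : ∀ i j, ContDiff ℝ (⊤ : ℕ∞) (a i j))
    (ha_bdd : ∀ i j, ∃ C, ∀ t, |a i j t| ≤ C)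
    (hb_smooth : ∀ i, ContDiff ℝ (⊤ : ℕ∞) (b i))
    (hb_bdd : ∀ i, ∃ C, ∀ t, |b i t| ≤ C)
    (hc_smooth : ContDiff ℝ (⊤ : ℕ∞) c)
    (hc_bdd : ∃ C, ∀ t, |c t| ≤ C)
    (hell : ∀ t ∈ Ioo (0:ℝ) T, ∀ ξ : Fin (n+1) → ℝ,
      ν₀ * ∑ i, ξ i ^ 2 ≤ ∑ i, ∑ j, a i j t * ξ i * ξ j)
    (D : Set (Fin n → ℝ)) (hD_open : IsOpen D) (hD_bdd : Bornology.IsBounded D)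
    (a1 b1 : ℝ) (hab : a1 < b1)
    (Ω1 : Set (Fin (n+1) → ℝ))
    (hΩ1 : Ω1 = {x : Fin (n+1) → ℝ | Fin.init x ∈ D ∧ x (Fin.last n) ∈ Ioo a1 b1})
    (ε : (Fin (n+1) → ℝ) → ℝ → ℝ)
    (hε_smooth : ContDiffOn ℝ (⊤ : ℕ∞)
      (fun q : (Fin (n+1) → ℝ) × ℝ => ε q.1 q.2) (closure Ω1 ×ˢ Icc 0 T))
    (hε_pde : ∀ x ∈ Ω1, ∀ t ∈ Ioo (0:ℝ) T, transOp p a b c ε x t = 0)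
    (hε_lat : ∀ X ∈ frontier D, ∀ xn ∈ Icc a1 b1, ∀ t ∈ Icc (0:ℝ) T,
      ε (Fin.snoc X xn) t = 0)
    (hε_ic : ∀ x ∈ Ω1, ε x 0 = 0)
    (hε_left : ∀ X ∈ D, ∀ t ∈ Ioo (0:ℝ) T, ε (Fin.snoc X a1) t = 0)
    (ν : (Fin (n+1) → ℝ) → ℝ → ℝ)
    (hν : ∀ x t, ν x t =
      fderivWithin ℝ (fun y => ε y t) (closure Ω1) x (Pi.single (Fin.last n) 1))
    (φ : ℝ → ℝ) (hφ : ContDiff ℝ 2 φ) (hφ_pos : ∀ x, 0 < φ x)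
    (hφ1 : ∃ C, ∀ x, |deriv φ x / φ x| ≤ C)
    (hφ2 : ∃ C, ∀ x, |deriv (deriv φ) x / φ x| ≤ C)
    (hφ_sign : ∀ t ∈ Icc (0:ℝ) T,
      0 < 4 * p + 2 * b (Fin.last n) t / a (Fin.last n) (Fin.last n) t
            + deriv φ a1 / φ a1)
    (Γ : ℝ)
    (hΓ : Γ = (⨆ t, |a (Fin.last n) (Fin.last n) t|) *
            (⨆ x, |deriv (deriv φ) x / φ x|)
          + 2 * (⨆ t, |a (Fin.last n) (Fin.last n) t|) * (⨆ x, |deriv φ x / φ x|) ^ 2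
          + 2 * (⨆ t, |c t - p * b (Fin.last n) t
                        - p ^ 2 * a (Fin.last n) (Fin.last n) t|)
          + (⨆ t, |2 * p * a (Fin.last n) (Fin.last n) t + b (Fin.last n) t|) *
            (⨆ x, |deriv φ x / φ x|))
    (ϕ : ℝ → ℝ) (hϕ : ContDiff ℝ 1 ϕ)
    (hϕ_pos : ∀ t ∈ Icc (0:ℝ) T, 0 < ϕ t)
    (hϕ_decay : ∀ t ∈ Icc (0:ℝ) T, deriv ϕ t / ϕ t ≤ -Γ) :
    ∀ X ∈ closure D, ∀ xn ∈ Icc a1 b1, ∀ t ∈ Icc (0:ℝ) T,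
      ν (Fin.snoc X xn) t ^ 2 * φ xn * ϕ t ≤
        sSup {y : ℝ | ∃ X' ∈ closure D, ∃ s ∈ Icc (0:ℝ) T,
          y = ν (Fin.snoc X' b1) s ^ 2 * φ b1 * ϕ s} := by
  subst hΩ1
  change ContDiffOn ℝ _ _ (closure (cylinder D a1 b1) ×ˢ Icc 0 T) at hε_smooth
  set u : (Fin (n+1) → ℝ) × ℝ → ℝ := fun q => ε q.1 q.2 with hu_def
  set K : Set ((Fin (n+1) → ℝ) × ℝ) := closure (cylinder D a1 b1) ×ˢ Icc 0 T with hK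
  have hνN : ∀ x t, ν x t = normalDeriv D a1 b1 u (x, t) := hν
  set N := normalDeriv D a1 b1 u with hN
  have hu4 : ContDiffOn ℝ 4 u K := hε_smooth.of_le (WithTop.coe_le_coe.2 (le_top : (4 : ℕ∞) ≤ ⊤))
  have hud : DifferentiableOn ℝ u K := hu4.differentiableOn (by norm_num)
  have hNc : ContinuousOn N K := continuousOn_normalDeriv hab (hu4.of_le (by norm_num))
  have hsnoc : ∀ X ∈ closure D, ∀ s ∈ Icc a1 b1,
      (Fin.snoc X s : Fin (n+1) → ℝ) ∈ closure (cylinder D a1 b1) := by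
    intro X hX s hs
    rw [closure_cylinder D hab]
    exact ⟨by simpa using hX, by simpa using hs⟩
  have hKmem : ∀ q ∈ K, Fin.init q.1 ∈ closure D ∧ q.1 (Fin.last n) ∈ Icc a1 b1 := by
    intro q hq
    have h := hq.1
    rwa [closure_cylinder D hab] at h
  have hann : ∀ t ∈ Ioo 0 T, 0 < a (Fin.last n) (Fin.last n) t := by
    intro t ht
    have h := hell t ht (Pi.single (Fin.last n) 1)
    simp [Pi.single_apply] at h
    linarith
  have hpsd : ∀ t ∈ Ioo 0 T, ∀ ξ : Fin (n+1) → ℝ, 0 ≤ ∑ i, ∑ j, a i j t * ξ i * ξ j :=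
    fun t ht ξ => le_trans (by positivity) (hell t ht ξ)
  have hac : ∀ i j, Continuous (a i j) := fun i j => (ha_smooth i j).continuous
  have hbc : ∀ i, Continuous (b i) := fun i => (hb_smooth i).continuous
  have hcc : Continuous c := hc_smooth.continuous
  have hφc := hφ.continuous
  have hϕc := hϕ.continuous
  have hpde : ∀ q ∈ cylinder D a1 b1 ×ˢ Ioo 0 T,
      spacetimeOp a (fun i t => 2 * p * a i (Fin.last n) t + b i t)
        (fun t => c t - p * b (Fin.last n) t - p ^ 2 * a (Fin.last n) (Fin.last n) t) u q = 0 := by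
    rintro ⟨x, t⟩ hq
    rw [← hε_pde x hq.1 t hq.2]
    exact (transOp_eq_spacetimeOp p a b c ε
      ((isOpen_cylinder hD_open a1 b1).prod isOpen_Ioo)
      ((hu4.mono (prod_mono subset_closure Ioo_subset_Icc_self)).of_le (by norm_num)) hq).symm
  have hlat : ∀ q ∈ K, Fin.init q.1 ∈ frontier D → N q = 0 := fun q hq hX =>
    normalDeriv_eq_zero hab hq (hud q hq) fun s hs => hε_lat _ hX s hs _ hq.2
  have hzero : ∀ x ∈ closure (cylinder D a1 b1), u (x, 0) = 0 := by
    have hcont : ContinuousOn (fun x => u (x, 0)) (closure (cylinder D a1 b1)) :=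
      hud.continuousOn.comp (by fun_prop) fun x hx => ⟨hx, left_mem_Icc.2 hT.le⟩
    exact EqOn.of_subset_closure (s := cylinder D a1 b1) (g := fun _ => (0:ℝ)) hε_ic hcont
      continuousOn_const subset_closure subset_rfl
  have hinit : ∀ q ∈ K, q.2 = 0 → N q = 0 := by
    intro q hq h0
    refine normalDeriv_eq_zero hab hq (hud q hq) fun s hs => ?_
    rw [h0]
    exact hzero _ (hsnoc _ (hKmem q hq).1 s hs)
  have hleft : ∀ q : (Fin (n+1) → ℝ) × ℝ, Fin.init q.1 ∈ D → q.1 (Fin.last n) = a1 →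
      q.2 ∈ Ioo 0 T → u q = 0 := by
    intro q h1 h2 h3
    have h := hε_left _ h1 _ h3
    rwa [← h2, Fin.snoc_init_self] at h
  have hsign : ∀ t ∈ Ioo 0 T,
      0 < 2 * (2 * p * a (Fin.last n) (Fin.last n) t + b (Fin.last n) t)
        / a (Fin.last n) (Fin.last n) t + deriv φ a1 / φ a1 := by
    intro t ht
    have h := hφ_sign t (Ioo_subset_Icc_self ht)
    have hne := (hann t ht).ne'
    have heq : 2 * (2 * p * a (Fin.last n) (Fin.last n) t + b (Fin.last n) t)
        / a (Fin.last n) (Fin.last n) t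
        = 4 * p + 2 * b (Fin.last n) t / a (Fin.last n) (Fin.last n) t := by
      field_simp
      ring
    rwa [heq]
  obtain ⟨Ca, hCa⟩ := ha_bdd (Fin.last n) (Fin.last n)
  obtain ⟨Cb, hCb⟩ := hb_bdd (Fin.last n)
  obtain ⟨Cc, hCc⟩ := hc_bdd
  have hΓ_le : ∀ t x, -Γ ≤
      a (Fin.last n) (Fin.last n) t * (deriv (deriv φ) x / φ x)
      - 3 / 2 * a (Fin.last n) (Fin.last n) t * (deriv φ x / φ x) ^ 2
      + 2 * (c t - p * b (Fin.last n) t - p ^ 2 * a (Fin.last n) (Fin.last n) t)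
      - (2 * p * a (Fin.last n) (Fin.last n) t + b (Fin.last n) t) * (deriv φ x / φ x) := by
    intro t x
    rw [hΓ]
    refine neg_decayRate_le (abs_le_ciSup_of_bounded ⟨Ca, hCa⟩ t)
      (abs_le_ciSup_of_bounded hφ1 x) (abs_le_ciSup_of_bounded hφ2 x)
      (abs_le_ciSup_of_bounded (f := fun t => c t - p * b (Fin.last n) t
        - p ^ 2 * a (Fin.last n) (Fin.last n) t) ⟨Cc + |p| * Cb + p ^ 2 * Ca, fun t => ?_⟩ t)
      (abs_le_ciSup_of_bounded (f := fun t => 2 * p * a (Fin.last n) (Fin.last n) t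
        + b (Fin.last n) t) ⟨2 * |p| * Ca + Cb, fun t => ?_⟩ t)
    · refine (abs_sub _ _).trans (add_le_add ((abs_sub _ _).trans (add_le_add (hCc t) ?_)) ?_)
      · rw [abs_mul]
        exact mul_le_mul_of_nonneg_left (hCb t) (abs_nonneg _)
      · rw [abs_mul, abs_of_nonneg (sq_nonneg p)]
        exact mul_le_mul_of_nonneg_left (hCa t) (sq_nonneg _)
    · refine (abs_add_le _ _).trans (add_le_add ?_ (hCb t))
      rw [abs_mul, abs_mul, abs_two]
      exact mul_le_mul_of_nonneg_left (hCa t) (by positivity)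
  set S : Set ℝ := {y : ℝ | ∃ X' ∈ closure D, ∃ s ∈ Icc (0:ℝ) T,
    y = ν (Fin.snoc X' b1) s ^ 2 * φ b1 * ϕ s} with hS
  have hM : 0 ≤ sSup S := by
    refine Real.sSup_nonneg ?_
    rintro _ ⟨X, -, s, hs, rfl⟩
    have h1 := hφ_pos b1
    have h2 := hϕ_pos s hs
    positivity
  have hSb : BddAbove S := by
    have hcomp : IsCompact K := (isCompact_closure_cylinder hD_bdd hab).prod isCompact_Icc
    obtain ⟨B, hB⟩ := (hcomp.image_of_continuousOn
      (f := fun q => N q ^ 2 * φ b1 * ϕ q.2) (by fun_prop)).bddAbove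
    refine ⟨B, ?_⟩
    rintro _ ⟨X, hX, s, hs, rfl⟩
    rw [hνN]
    exact hB ⟨(Fin.snoc X b1, s), ⟨hsnoc X hX b1 (right_mem_Icc.2 hab.le), hs⟩, rfl⟩
  have hright : ∀ q ∈ K, q.1 (Fin.last n) = b1 → N q ^ 2 * φ b1 * ϕ q.2 ≤ sSup S := by
    intro q hq hqb
    refine le_csSup hSb ⟨Fin.init q.1, (hKmem q hq).1, q.2, hq.2, ?_⟩
    rw [hνN, ← hqb, Fin.snoc_init_self]
  have hdamped : ∀ δ > 0, ∀ x ∈ closure (cylinder D a1 b1), ∀ t ∈ Ico 0 T,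
      N (x, t) ^ 2 * φ (x (Fin.last n)) * (ϕ t * Real.exp (-δ * t)) ≤ sSup S := by
    intro δ hδ x hx t ht
    have hexp : ∀ t, HasDerivAt (fun t => ϕ t * Real.exp (-δ * t))
        (deriv ϕ t * Real.exp (-δ * t) + ϕ t * (Real.exp (-δ * t) * -δ)) t := fun t =>
      ((hϕ.differentiable (by norm_num) t).hasDerivAt).mul
        (by simpa using ((hasDerivAt_id' t).const_mul (-δ)).exp)
    refine weighted_sq_normalDeriv_le (T := T) ht.2 hac (fun i => by fun_prop) (by fun_prop)
      ha_symm hpsd hann hD_open hD_bdd hab hu4 hpde hleft hlat hinit hφ hφ_pos hsign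
      (fun t => (hexp t).differentiableAt)
      (fun t ht => mul_pos (hϕ_pos t ht) (Real.exp_pos _)) ?_ hM ?_ (x, t)
      ⟨hx, ht.1, le_rfl⟩
    · intro t ht x
      refine lt_of_lt_of_le ?_ (hΓ_le t x)
      have hpos := hϕ_pos t (Ioo_subset_Icc_self ht)
      have h := hϕ_decay t (Ioo_subset_Icc_self ht)
      have heq : deriv (fun t => ϕ t * Real.exp (-δ * t)) t / (ϕ t * Real.exp (-δ * t))
          = deriv ϕ t / ϕ t - δ := by
        have := Real.exp_pos (-δ * t)
        rw [(hexp t).deriv]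
        field_simp
        ring
      rw [heq]
      linarith
    · intro q hq hqb
      refine le_trans ?_ (hright q hq hqb)
      have h1 := hφ_pos b1
      refine mul_le_mul_of_nonneg_left ?_ (by positivity)
      exact mul_le_of_le_one_right (hϕ_pos _ hq.2).le
        (Real.exp_le_one_iff.2 (by nlinarith [hq.2.1]))
  have hopen : ∀ x ∈ closure (cylinder D a1 b1), ∀ t ∈ Ico 0 T,
      N (x, t) ^ 2 * φ (x (Fin.last n)) * ϕ t ≤ sSup S := by
    intro x hx t ht
    have hlim : Tendsto (fun δ : ℝ =>
        N (x, t) ^ 2 * φ (x (Fin.last n)) * (ϕ t * Real.exp (-δ * t))) (𝓝[>] 0)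
        (𝓝 (N (x, t) ^ 2 * φ (x (Fin.last n)) * ϕ t)) := by
      have h : Continuous fun δ : ℝ =>
        N (x, t) ^ 2 * φ (x (Fin.last n)) * (ϕ t * Real.exp (-δ * t)) := by fun_prop
      simpa using (h.tendsto 0).mono_left nhdsWithin_le_nhds
    exact le_of_tendsto hlim
      (eventually_nhdsWithin_of_forall fun δ hδ => hdamped δ hδ x hx t ht)
  have hclosed : ∀ x ∈ closure (cylinder D a1 b1), ∀ t ∈ Icc 0 T,
      N (x, t) ^ 2 * φ (x (Fin.last n)) * ϕ t ≤ sSup S := by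
    intro x hx t ht
    have hNt : ContinuousOn (fun t => N (x, t)) (Icc 0 T) :=
      hNc.comp (by fun_prop) fun t ht => ⟨hx, ht⟩
    have hcont : ContinuousOn (fun t => N (x, t) ^ 2 * φ (x (Fin.last n)) * ϕ t)
        (closure (Ico 0 T)) := by
      rw [closure_Ico hT.ne]
      exact ((hNt.pow 2).mul continuousOn_const).mul hϕc.continuousOn
    exact le_on_closure (hopen x hx) hcont continuousOn_const
      (by rwa [closure_Ico hT.ne])
  intro X hX xn hxn t ht
  simpa [hνN] using hclosed _ (hsnoc X hX xn hxn) t ht
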